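/- Let V be a finite type of variables, X : V, and let A be a Büchi automaton over the alphabet Set V. Then there exists a Büchi automaton B over Set V such that for every sequence σ : ℕ → Set V, B accepts σ if and only if there exists a sequence τ : ℕ → Set V with A accepting τ and such that for every variable Z ≠ X and every n, Z ∈ σ n ↔ Z ∈ τ n. -/

import Mathlib

namespace Buechi

/-- Nonempty finite strings over `α`, given as a head together with a tail. -/
abbrev NStr (α : Type*) : Type _ := α × List α

/-- The list of symbols of a nonempty string. -/
def NStr.toList {α : Type*} (s : NStr α) : List α := s.1 :: s.2

/-- Büchi automata over alphabet `α`: a finite type of states, a transition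
relation, initial states and accepting states. -/
structure BA (α : Type*) where
  Q : Type
  fin : Fintype Q
  trans : Q → α → Q → Prop
  init : Q → Prop
  accept : Q → Prop

/-- Büchi acceptance: there is a run starting in an initial state, respecting the
transition relation, and visiting accepting states infinitely often. -/
def BA.Accepts {α : Type*} (M : BA α) (σ : ℕ → α) : Prop :=
  ∃ ρ : ℕ → M.Q, M.init (ρ 0) ∧ (∀ n, M.trans (ρ n) (σ n) (ρ (n + 1))) ∧
    ∀ k, ∃ n, k ≤ n ∧ M.accept (ρ n)

/-- The preimage of a Büchi automaton under a relation `R` between letters, which is the projection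
of automata when `R` forgets part of a letter. It has the states of `M`; on reading `a` it guesses
a letter `b` with `R a b` and moves as `M` does on `b`. -/
def BA.relPreimage {α β : Type*} (R : α → β → Prop) (M : BA β) : BA α where
  Q := M.Q
  fin := M.fin
  trans p a q := ∃ b, R a b ∧ M.trans p b q
  init := M.init
  accept := M.accept

theorem BA.accepts_relPreimage_iff {α β : Type*} (R : α → β → Prop) (M : BA β) (σ : ℕ → α) :
    (M.relPreimage R).Accepts σ ↔ ∃ τ : ℕ → β, M.Accepts τ ∧ ∀ n, R (σ n) (τ n) := by
  constructor
  · rintro ⟨ρ, hinit, htrans, haccept⟩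
    choose τ hR hM using htrans
    exact ⟨τ, ⟨ρ, hinit, hM, haccept⟩, hR⟩
  · rintro ⟨τ, ⟨ρ, hinit, hM, haccept⟩, hR⟩
    exact ⟨ρ, hinit, fun n => ⟨τ n, hR n, hM n⟩, haccept⟩

theorem ex_automaton_exists_general {V : Type*} (S : Set V) (A : BA (Set V)) :
    ∃ B : BA (Set V), ∀ σ : ℕ → Set V,
      B.Accepts σ ↔ ∃ τ : ℕ → Set V, A.Accepts τ ∧
        ∀ Z : V, Z ∉ S → ∀ n, (Z ∈ σ n ↔ Z ∈ τ n) := by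
  let AgreeOff (s t : Set V) : Prop := ∀ Z ∉ S, (Z ∈ s ↔ Z ∈ t)
  have agree_iff (σ τ : ℕ → Set V) :
      (∀ n, AgreeOff (σ n) (τ n)) ↔ ∀ Z ∉ S, ∀ n, (Z ∈ σ n ↔ Z ∈ τ n) :=
    ⟨fun h Z hZ n => h n Z hZ, fun h n Z hZ => h Z hZ n⟩
  refine ⟨A.relPreimage AgreeOff, fun σ => ?_⟩
  simp only [BA.accepts_relPreimage_iff, agree_iff]

/-- The automaton for existential quantification: given a variable `X` and an
automaton `A` over `Set V`, there is an automaton accepting exactly the sequences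
that agree with some sequence accepted by `A` on all variables except possibly `X`. -/
theorem ex_automaton_exists {V : Type} [Fintype V] (X : V) (A : BA (Set V)) :
    ∃ B : BA (Set V), ∀ σ : ℕ → Set V,
      B.Accepts σ ↔ ∃ τ : ℕ → Set V, A.Accepts τ ∧
        ∀ Z : V, Z ≠ X → ∀ n, (Z ∈ σ n ↔ Z ∈ τ n) :=
  ex_automaton_exists_general {X} A

end Buechi
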